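/- Let {V_m}_{m∈ℕ} be a sequence of N×N real matrix polynomials with deg V_m = m, nonsingular leading coefficients, and V_0 = I_{N×N}. Then the following are equivalent: (a) there exists a linear map W : ℝ[x] → M_N(ℝ) (a matrix moment functional, encoding integration against a matrix of measures), with moments S_k := W(x^k), such that ∫V_m(x)dW(x)·x^k := Σ_j V_{m,j}·S_{j+k} (where V_m(x) = Σ_j V_{m,j}x^j) equals Ω_m·δ_{k,m} for all 0 ≤ k ≤ m and all m, with each Ω_m a nonsingular upper triangular matrix; (b) there exist sequences of N×N matrices {A_m}, {B_m}, {C_m}, with each A_m nonsingular and each C_m (m ≥ 1) nonsingular upper triangular, such that z·V_m(z) = A_m·V_{m+1}(z) + B_m·V_m(z) + C_m·V_{m−1}(z) for every m ≥ 0, with V_{−1} := 0. Moreover, in that case Ω_m = C_m·C_{m−1}⋯C_1·Ω_0. -/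

import Mathlib

open Polynomial Matrix Finset

noncomputable section

abbrev Mat (N : ℕ) := Matrix (Fin N) (Fin N) ℝ

/-- `N×N` real matrix polynomials. -/
abbrev MatPoly (N : ℕ) := Polynomial (Mat N)

def UpperTri {N : ℕ} {R : Type*} [Zero R] (A : Matrix (Fin N) (Fin N) R) : Prop :=
  ∀ i j : Fin N, (j : ℕ) < (i : ℕ) → A i j = 0

def LowerTri {N : ℕ} {R : Type*} [Zero R] (A : Matrix (Fin N) (Fin N) R) : Prop :=
  ∀ i j : Fin N, (i : ℕ) < (j : ℕ) → A i j = 0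

/-- The left pairing `∫ V_m(x) dW(x) x^k = ∑_j V_{m,j} S_{j+k}`, where `S_i = W(x^i)`
and `V_m` has degree `m`. -/
def leftPair (N : ℕ) (W : Polynomial ℝ →ₗ[ℝ] Mat N) (V : MatPoly N) (m k : ℕ) : Mat N :=
  ∑ j ∈ Finset.range (m + 1), V.coeff j * W (X ^ (j + k))

section MomentPairing

variable {R : Type*} [Ring R]

/-- The pairing `P ↦ ∑ j, P_j * S (j + k)` of a polynomial against `x ^ k`, for moments `S`. -/
def momentPairing (S : ℕ → R) (k : ℕ) : R[X] →ₗ[R] R :=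
  Polynomial.lsum fun j => LinearMap.toSpanSingleton R R (S (j + k))

theorem momentPairing_apply (S : ℕ → R) (k : ℕ) (P : R[X]) :
    momentPairing S k P = P.sum fun j a => a * S (j + k) := by
  simp [momentPairing, Polynomial.lsum_apply]

theorem momentPairing_eq_sum_range (S : ℕ → R) (k : ℕ) {P : R[X]} {m : ℕ}
    (hP : P.natDegree ≤ m) :
    momentPairing S k P = ∑ j ∈ range (m + 1), P.coeff j * S (j + k) := by
  rw [momentPairing_apply]
  exact P.sum_over_range' (f := fun j a => a * S (j + k)) (fun _ => zero_mul _) (m + 1)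
    (Nat.lt_succ_of_le hP)

theorem momentPairing_C_mul (S : ℕ → R) (k : ℕ) (a : R) (P : R[X]) :
    momentPairing S k (C a * P) = a * momentPairing S k P := by
  rw [← smul_eq_C_mul, map_smul, smul_eq_mul]

theorem momentPairing_X_mul (S : ℕ → R) (k : ℕ) (P : R[X]) :
    momentPairing S k (X * P) = momentPairing S (k + 1) P := by
  have hX : (X * P).natDegree ≤ P.natDegree + 1 := by
    rw [X_mul]
    exact natDegree_mul_le_of_le le_rfl natDegree_X_le
  rw [momentPairing_eq_sum_range S k hX, momentPairing_eq_sum_range S (k + 1) le_rfl,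
    Finset.sum_range_succ']
  simp [coeff_X_mul, add_assoc, add_comm 1 k]

/-- The three-term recurrence, with the convention `V (-1) = 0`. -/
def ThreeTermRecurrence (V : ℕ → R[X]) (A B D : ℕ → R) : Prop :=
  ∀ m : ℕ, X * V m = C (A m) * V (m + 1) + C (B m) * V m
    + (if m = 0 then 0 else C (D m) * V (m - 1))

theorem ThreeTermRecurrence.momentPairing_succ {V : ℕ → R[X]} {A B D : ℕ → R}
    (h : ThreeTermRecurrence V A B D) (S : ℕ → R) (m k : ℕ) :
    momentPairing S (k + 1) (V (m + 1)) = A (m + 1) * momentPairing S k (V (m + 2))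
      + B (m + 1) * momentPairing S k (V (m + 1)) + D (m + 1) * momentPairing S k (V m) := by
  rw [← momentPairing_X_mul, h (m + 1)]
  simp [momentPairing_C_mul]

/-- Left orthogonality of `V` with respect to the moments `S`. -/
def LeftOrthogonal (S : ℕ → R) (V : ℕ → R[X]) (Ω : ℕ → R) : Prop :=
  ∀ m k, k ≤ m → momentPairing S k (V m) = if k = m then Ω m else 0

theorem LeftOrthogonal.of_lt {S : ℕ → R} {V : ℕ → R[X]} {Ω : ℕ → R}
    (h : LeftOrthogonal S V Ω) {m k : ℕ} (hk : k < m) : momentPairing S k (V m) = 0 := by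
  rw [h m k hk.le, if_neg hk.ne]

theorem LeftOrthogonal.self {S : ℕ → R} {V : ℕ → R[X]} {Ω : ℕ → R}
    (h : LeftOrthogonal S V Ω) (m : ℕ) : momentPairing S m (V m) = Ω m := by
  rw [h m m le_rfl, if_pos rfl]

theorem LeftOrthogonal.eq_mul_pred {S : ℕ → R} {V : ℕ → R[X]} {Ω A B D : ℕ → R}
    (h : LeftOrthogonal S V Ω) (hrec : ThreeTermRecurrence V A B D) (m : ℕ) :
    Ω (m + 1) = D (m + 1) * Ω m := by
  rw [← h.self, hrec.momentPairing_succ, h.of_lt (by lia), h.of_lt (by lia), h.self]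
  simp

/-- A polynomial of degree less than `n` orthogonal to `x ^ k` for all `k < n` vanishes. -/
theorem LeftOrthogonal.eq_zero_of_pairing_eq_zero {S : ℕ → R} {V : ℕ → R[X]} {Ω : ℕ → R}
    (h : LeftOrthogonal S V Ω) (hdeg : ∀ m, (V m).natDegree ≤ m)
    (hlead : ∀ m, IsUnit ((V m).coeff m)) (hΩ : ∀ m, IsUnit (Ω m)) (n : ℕ) :
    ∀ P : R[X], (∀ j, n ≤ j → P.coeff j = 0) → (∀ k < n, momentPairing S k P = 0) → P = 0 := by
  induction n with
  | zero =>
    intro P hP _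
    ext j
    simpa using hP j j.zero_le
  | succ n ih =>
    intro P hP hpair
    obtain ⟨u, hu⟩ := hlead n
    have hQ : P - C (P.coeff n * ↑u⁻¹) * V n = 0 := by
      refine ih _ (fun j hj => ?_) (fun k hk => ?_)
      · rw [coeff_sub, coeff_C_mul]
        rcases hj.eq_or_lt with rfl | hj
        · rw [← hu, mul_assoc, Units.inv_mul, mul_one, sub_self]
        · rw [hP j hj, coeff_eq_zero_of_natDegree_lt ((hdeg n).trans_lt hj), mul_zero, sub_zero]
      · rw [map_sub, momentPairing_C_mul, h.of_lt hk, hpair k (by lia), mul_zero, sub_zero]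
    have hP' := sub_eq_zero.mp hQ
    have hn := hpair n (by lia)
    rw [hP', momentPairing_C_mul, h.self] at hn
    rw [hP', (hΩ n).mul_left_eq_zero.mp hn, C_0, zero_mul]

theorem LeftOrthogonal.exists_threeTermRecurrence {S : ℕ → R} {V : ℕ → R[X]} {Ω : ℕ → R}
    (h : LeftOrthogonal S V Ω) (hdeg : ∀ m, (V m).natDegree ≤ m)
    (hlead : ∀ m, IsUnit ((V m).coeff m)) (hΩ : ∀ m, IsUnit (Ω m)) :
    ∃ A B : ℕ → R, (∀ m, IsUnit (A m)) ∧
      ThreeTermRecurrence V A B fun m => Ω m * Ring.inverse (Ω (m - 1)) := by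
  have hhigh {m j : ℕ} (hj : m < j) : (V m).coeff j = 0 :=
    coeff_eq_zero_of_natDegree_lt ((hdeg m).trans_lt hj)
  let A : ℕ → R := fun m => (V m).coeff m * Ring.inverse ((V (m + 1)).coeff (m + 1))
  let B : ℕ → R := fun m =>
    ((X * V m).coeff m - A m * (V (m + 1)).coeff m) * Ring.inverse ((V m).coeff m)
  have hA (m : ℕ) : A m * (V (m + 1)).coeff (m + 1) = (V m).coeff m := by
    simp only [A, mul_assoc, Ring.inverse_mul_cancel _ (hlead _), mul_one]
  have hB (m : ℕ) :
      B m * (V m).coeff m = (X * V m).coeff m - A m * (V (m + 1)).coeff m := by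
    simp only [B, mul_assoc, Ring.inverse_mul_cancel _ (hlead _), mul_one]
  refine ⟨A, B, fun m => (hlead m).mul (hlead (m + 1)).ringInverse, fun m => ?_⟩
  rw [← sub_eq_zero]
  refine h.eq_zero_of_pairing_eq_zero hdeg hlead hΩ m _ (fun j hj => ?_) (fun k hk => ?_)
  · have hlast : (if m = 0 then 0 else
        C (Ω m * Ring.inverse (Ω (m - 1))) * V (m - 1)).coeff j = 0 := by
      split_ifs with hm
      · simp
      · rw [coeff_C_mul, hhigh (by lia), mul_zero]
    rw [coeff_sub, coeff_add, coeff_add, hlast, coeff_C_mul, coeff_C_mul]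
    rcases hj.eq_or_lt with rfl | hj
    · rw [hB]; abel
    · rw [hhigh hj]
      obtain ⟨i, rfl⟩ : ∃ i, j = i + 1 := ⟨j - 1, by lia⟩
      rw [coeff_X_mul]
      rcases (Nat.le_of_lt_succ hj).eq_or_lt with rfl | hi
      · rw [hA]; simp
      · rw [hhigh hi, hhigh (by lia)]; simp
  · obtain ⟨n, rfl⟩ : ∃ n, m = n + 1 := ⟨m - 1, by lia⟩
    rw [if_neg n.succ_ne_zero, map_sub, map_add, map_add, momentPairing_X_mul,
      momentPairing_C_mul, momentPairing_C_mul, momentPairing_C_mul, h.of_lt hk,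
      h.of_lt (by lia : k < n + 1 + 1), Nat.add_sub_cancel]
    rcases (Nat.le_of_lt_succ hk).eq_or_lt with rfl | hk
    · rw [h.self, h.self]
      simp [mul_assoc, Ring.inverse_mul_cancel _ (hΩ _)]
    · rw [h.of_lt (by lia), h.of_lt hk]
      simp

/-- The moments determined by `S 0 = 1` and `∑ j, (V m)_j * S j = 0` for `m ≥ 1`. -/
def recurrenceMoments (V : ℕ → R[X]) : ℕ → R
  | 0 => 1
  | m + 1 => -(Ring.inverse ((V (m + 1)).coeff (m + 1)) *
      ∑ j : Fin (m + 1), (V (m + 1)).coeff j * recurrenceMoments V j)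

theorem momentPairing_recurrenceMoments_zero {V : ℕ → R[X]} (hdeg : ∀ m, (V m).natDegree ≤ m)
    (hlead : ∀ m, IsUnit ((V m).coeff m)) (m : ℕ) :
    momentPairing (recurrenceMoments V) 0 (V (m + 1)) = 0 := by
  rw [momentPairing_eq_sum_range _ _ (hdeg _), sum_range_succ, add_zero, recurrenceMoments,
    mul_neg, ← mul_assoc, Ring.mul_inverse_cancel _ (hlead _), one_mul,
    Fin.sum_univ_eq_sum_range (fun j => (V (m + 1)).coeff j * recurrenceMoments V j)]
  simp

/-- The products `D m * ⋯ * D 1`. -/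
def descendingProd (D : ℕ → R) : ℕ → R
  | 0 => 1
  | m + 1 => D (m + 1) * descendingProd D m

theorem ThreeTermRecurrence.leftOrthogonal {V : ℕ → R[X]} {A B D : ℕ → R}
    (h : ThreeTermRecurrence V A B D) (hdeg : ∀ m, (V m).natDegree ≤ m)
    (hlead : ∀ m, IsUnit ((V m).coeff m)) (hV0 : V 0 = 1) :
    LeftOrthogonal (recurrenceMoments V) V (descendingProd D) := by
  suffices H : ∀ k m, k ≤ m → momentPairing (recurrenceMoments V) k (V m) =
      if k = m then descendingProd D m else 0 from fun m k => H k m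
  intro k
  induction k with
  | zero =>
    rintro (_ | m) _
    · rw [momentPairing_eq_sum_range _ _ (hdeg 0)]
      simp [hV0, recurrenceMoments, descendingProd]
    · simpa using momentPairing_recurrenceMoments_zero hdeg hlead m
  | succ k ih =>
    rintro (_ | m) hk
    · lia
    · rw [h.momentPairing_succ, ih _ (by lia), ih _ (by lia), ih m (by lia),
        if_neg (by lia), if_neg (by lia)]
      by_cases hkm : k = m <;> simp [hkm, descendingProd]

end MomentPairing

section UpperTriangular

variable {N : ℕ}

theorem upperTri_iff_blockTriangular {A : Mat N} : UpperTri A ↔ A.BlockTriangular id :=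
  Iff.rfl

theorem UpperTri.mul {A B : Mat N} (hA : UpperTri A) (hB : UpperTri B) : UpperTri (A * B) :=
  upperTri_iff_blockTriangular.mpr (BlockTriangular.mul hA hB)

theorem UpperTri.ringInverse {A : Mat N} (hA : UpperTri A) (hu : IsUnit A) :
    UpperTri (Ring.inverse A) := by
  have := hu.invertible
  rw [← Matrix.nonsing_inv_eq_ringInverse]
  exact blockTriangular_inv_of_blockTriangular (b := id) hA

theorem upperTri_isUnit_descendingProd {D : ℕ → Mat N}
    (hD : ∀ m, 1 ≤ m → UpperTri (D m) ∧ IsUnit (D m)) (m : ℕ) :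
    UpperTri (descendingProd D m) ∧ IsUnit (descendingProd D m) := by
  induction m with
  | zero => exact ⟨upperTri_iff_blockTriangular.mpr blockTriangular_one, isUnit_one⟩
  | succ m ih =>
    obtain ⟨ht, hu⟩ := hD (m + 1) (by lia)
    exact ⟨ht.mul ih.1, hu.mul ih.2⟩

end UpperTriangular

theorem leftPair_eq_momentPairing {N : ℕ} (W : ℝ[X] →ₗ[ℝ] Mat N) {P : MatPoly N} {m : ℕ}
    (hP : P.natDegree ≤ m) (k : ℕ) :
    leftPair N W P m k = momentPairing (fun i => W (X ^ i)) k P :=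
  (momentPairing_eq_sum_range (fun i => W (X ^ i)) k hP).symm

theorem exists_linearMap_X_pow {M : Type*} [AddCommGroup M] [Module ℝ M] (S : ℕ → M) :
    ∃ W : ℝ[X] →ₗ[ℝ] M, (fun i => W (X ^ i)) = S := by
  refine ⟨Polynomial.lsum fun i => LinearMap.toSpanSingleton ℝ M (S i), funext fun i => ?_⟩
  simp [Polynomial.lsum_apply, X_pow_eq_monomial, sum_monomial_index]

theorem statement10
    (N : ℕ) (hN : 0 < N)
    (V : ℕ → MatPoly N) (hVdeg : ∀ m, (V m).natDegree = m)
    (hVlead : ∀ m, IsUnit ((V m).coeff m).det) (hV0 : V 0 = 1) :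
    -- (a) ⟺ (b)
    ((∃ (W : Polynomial ℝ →ₗ[ℝ] Mat N) (Ω : ℕ → Mat N),
        (∀ m, UpperTri (Ω m) ∧ IsUnit (Ω m).det) ∧
        (∀ m k, k ≤ m → leftPair N W (V m) m k = if k = m then Ω m else 0))
    ↔ (∃ A B C : ℕ → Mat N,
        (∀ m, IsUnit (A m).det) ∧
        (∀ m, 1 ≤ m → UpperTri (C m) ∧ IsUnit (C m).det) ∧
        (∀ m : ℕ, X * V m = Polynomial.C (A m) * V (m + 1) + Polynomial.C (B m) * V m
          + (if m = 0 then 0 else Polynomial.C (C m) * V (m - 1))))) ∧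
    -- moreover, Ω_m = C_m C_{m-1} ⋯ C_1 Ω_0
    (∀ (W : Polynomial ℝ →ₗ[ℝ] Mat N) (Ω A B C : ℕ → Mat N),
      (∀ m, UpperTri (Ω m) ∧ IsUnit (Ω m).det) →
      (∀ m k, k ≤ m → leftPair N W (V m) m k = if k = m then Ω m else 0) →
      (∀ m, IsUnit (A m).det) →
      (∀ m, 1 ≤ m → UpperTri (C m) ∧ IsUnit (C m).det) →
      (∀ m : ℕ, X * V m = Polynomial.C (A m) * V (m + 1) + Polynomial.C (B m) * V m
        + (if m = 0 then 0 else Polynomial.C (C m) * V (m - 1))) →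
      ∀ m, 1 ≤ m → Ω m = C m * Ω (m - 1)) := by
  simp only [← Matrix.isUnit_iff_isUnit_det] at hVlead ⊢
  have hdeg (m : ℕ) : (V m).natDegree ≤ m := (hVdeg m).le
  simp only [leftPair_eq_momentPairing _ (hdeg _)]
  refine ⟨⟨?_, ?_⟩, ?_⟩
  · rintro ⟨W, Ω, hΩ, h⟩
    have h : LeftOrthogonal (fun i => W (X ^ i)) V Ω := h
    obtain ⟨A, B, hA, hrec⟩ :=
      h.exists_threeTermRecurrence hdeg hVlead fun m => (hΩ m).2
    exact ⟨A, B, _, hA, fun m _ => ⟨(hΩ m).1.mul ((hΩ (m - 1)).1.ringInverse (hΩ (m - 1)).2),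
      (hΩ m).2.mul (hΩ (m - 1)).2.ringInverse⟩, hrec⟩
  · rintro ⟨A, B, D, -, hD, hrec⟩
    have hrec : ThreeTermRecurrence V A B D := hrec
    obtain ⟨W, hW⟩ := exists_linearMap_X_pow (recurrenceMoments V)
    refine ⟨W, descendingProd D, upperTri_isUnit_descendingProd hD, ?_⟩
    rw [hW]
    exact hrec.leftOrthogonal hdeg hVlead hV0
  · intro W Ω A B D _ h _ _ hrec m hm
    obtain ⟨n, rfl⟩ : ∃ n, m = n + 1 := ⟨m - 1, by lia⟩
    exact LeftOrthogonal.eq_mul_pred h hrec n
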